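/- Let n ≥ 1, Z ⊆ ℤⁿ nonempty, H_Z a complex Hilbert space with orthonormal basis {e_m : m ∈ Z}, {ξ_m : m ∈ Z} a family of unit vectors in ℓ²(ℕ), and M the U_Z-covariant POVM on (𝕋ⁿ, ℬ(𝕋ⁿ)) acting on H_Z determined by ⟨e_k, M(B) e_l⟩ = ⟨ξ_k, ξ_l⟩ ∫_B ⟨z, k − l⟩ dμ_n(z). Let 𝐇 ⊆ ℓ²(ℕ) be the closed linear span of {ξ_m : m ∈ Z}. Then M is an extreme point of the convex set of all U_Z-covariant POVMs on (𝕋ⁿ, ℬ(𝕋ⁿ)) acting on H_Z if and only if the only bounded operator A on 𝐇 satisfying ⟨ξ_m, A ξ_m⟩ = 0 for all m ∈ Z is A = 0. -/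

import Mathlib

open MeasureTheory Set

local notation "⟪" x ", " y "⟫" => @inner ℂ _ _ x y

noncomputable instance : MeasurableSpace Circle := borel Circle
instance : BorelSpace Circle := ⟨rfl⟩

/-- A normalized positive operator valued measure (POVM). -/
structure POVM (Ω : Type*) [MeasurableSpace Ω] (H : Type*) [NormedAddCommGroup H]
    [InnerProductSpace ℂ H] [CompleteSpace H] where
  toFun : Set Ω → (H →L[ℂ] H)
  isPositive : ∀ B : Set Ω, MeasurableSet B → (toFun B).IsPositive
  normalized : toFun Set.univ = 1
  m_iUnion : ∀ B : ℕ → Set Ω, (∀ k, MeasurableSet (B k)) →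
    Pairwise (Function.onFun Disjoint B) → ∀ φ ψ : H,
      HasSum (fun k => ⟪φ, toFun (B k) ψ⟫) ⟪φ, toFun (⋃ k, B k) ψ⟫

/-- `ℓ²(ℕ)`. -/
noncomputable abbrev ell2 : Type := lp (fun _ : ℕ => ℂ) 2

/-- The character `⟨w, m⟩ = w₁^{m₁} ⋯ w_n^{m_n}` of the torus `𝕋ⁿ`. -/
noncomputable def torusChar {n : ℕ} (w : Fin n → Circle) (m : Fin n → ℤ) : ℂ :=
  ∏ i, (w i : ℂ) ^ (m i)

/-- Covariance of a POVM `M` on `𝕋ⁿ` acting on `H`: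
`U_Z(w) M(B) U_Z(w)* = M(w·B)` for all `w ∈ 𝕋ⁿ`. -/
def TorusCovariant {n : ℕ} {H : Type*} [NormedAddCommGroup H] [InnerProductSpace ℂ H]
    [CompleteSpace H] (U : (Fin n → Circle) → (H ≃ₗᵢ[ℂ] H))
    (M : POVM (Fin n → Circle) H) : Prop :=
  ∀ w : Fin n → Circle, ∀ B : Set (Fin n → Circle), MeasurableSet B →
    ∀ φ ψ : H,
      ⟪(U w φ : H), M.toFun ((fun z => w * z) '' B) (U w ψ)⟫ = ⟪φ, M.toFun B ψ⟫


/-- `M` is an extreme point of the convex set of `U`-covariant POVMs on `𝕋ⁿ`. -/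
def IsExtremeTorusCovariant {n : ℕ} {H : Type*} [NormedAddCommGroup H]
    [InnerProductSpace ℂ H] [CompleteSpace H]
    (U : (Fin n → Circle) → (H ≃ₗᵢ[ℂ] H)) (M : POVM (Fin n → Circle) H) : Prop :=
  ∀ M₁ M₂ : POVM (Fin n → Circle) H,
    TorusCovariant U M₁ → TorusCovariant U M₂ →
    ∀ t : ℝ, 0 < t → t < 1 →
    (∀ B : Set (Fin n → Circle), MeasurableSet B →
      M.toFun B = (t : ℂ) • M₁.toFun B + ((1 - t : ℝ) : ℂ) • M₂.toFun B) →
    ∀ B : Set (Fin n → Circle), MeasurableSet B →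
      M₁.toFun B = M.toFun B ∧ M₂.toFun B = M.toFun B

/- For a covariant POVM `M`, each complex measure `⟪e_k, M(B) e_l⟫` is equivariant under translation
with respect to the character `χ_k / χ_l`, hence equals `c_kl ∫_B χ_k / χ_l dμ` for a constant
`c_kl`. The matrix `c` is positive semidefinite (the density of `⟪φ, M(B) φ⟫` is continuous and
nonnegative, so evaluate it at `1`) with unit diagonal. Conversely every such `c` is a Gram matrix
`⟪v_k, v_l⟫` and comes from the covariant POVM obtained by compressing `B ↦ 1_B` on `L²(μ, V)` along
the isometry `e_k ↦ conj χ_k • v_k`. So `M` is extreme if and only if `c` is an extreme point of the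
set of correlation matrices. If `c` is the Gram matrix of `ξ`, a positive semidefinite matrix
dominated by a multiple of `c` has entries `⟪ξ_k, A ξ_l⟫` for some bounded `A`; hence, up to
scaling, the perturbations of `c` within the correlation matrices are those given by bounded
self-adjoint `A` with `⟪ξ_m, A ξ_m⟫ = 0` for all `m`. -/

section Gram

open Matrix
open scoped ComplexOrder

universe u v

variable {ι 𝕜 E V : Type*} [RCLike 𝕜] [NormedAddCommGroup E] [InnerProductSpace 𝕜 E]
  [NormedAddCommGroup V] [InnerProductSpace 𝕜 V]

lemma finsuppSum_gram (v : ι → E) (x : ι →₀ 𝕜) :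
    (x.sum fun i xi ↦ x.sum fun j xj ↦ star xi * gram 𝕜 v i j * xj)
      = (‖Finsupp.linearCombination 𝕜 v x‖ : 𝕜) ^ 2 := by
  rw [← inner_self_eq_norm_sq_to_K, Finsupp.linearCombination_apply, Finsupp.sum_inner]
  simp only [Finsupp.inner_sum, inner_smul_left, inner_smul_right, gram_apply,
    RCLike.star_def]
  exact Finsupp.sum_congr fun i _ ↦ Finsupp.sum_congr fun j _ ↦ by ring

/- `Matrix.posSemidef_gram` requires a finite index type. -/
lemma posSemidef_gram' (v : ι → E) : (gram 𝕜 v).PosSemidef := by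
  refine ⟨isHermitian_gram 𝕜 v, fun x ↦ ?_⟩
  rw [finsuppSum_gram]
  exact_mod_cast sq_nonneg ‖Finsupp.linearCombination 𝕜 v x‖

lemma norm_linearCombination_le_of_gram_le {ξ : ι → E} {v : ι → V} {C : ℝ}
    (h : (C • gram 𝕜 ξ - gram 𝕜 v).PosSemidef) (x : ι →₀ 𝕜) :
    ‖Finsupp.linearCombination 𝕜 v x‖ ≤ √C * ‖Finsupp.linearCombination 𝕜 ξ x‖ := by
  have hquad := h.2 x
  have hsplit : (x.sum fun i xi ↦ x.sum fun j xj ↦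
        star xi * (C • gram 𝕜 ξ - gram 𝕜 v) i j * xj)
      = C * (‖Finsupp.linearCombination 𝕜 ξ x‖ : 𝕜) ^ 2
        - (‖Finsupp.linearCombination 𝕜 v x‖ : 𝕜) ^ 2 := by
    rw [← finsuppSum_gram, ← finsuppSum_gram, Finsupp.mul_sum, ← Finsupp.sum_sub]
    refine Finsupp.sum_congr fun i _ ↦ ?_
    rw [Finsupp.mul_sum, ← Finsupp.sum_sub]
    refine Finsupp.sum_congr fun j _ ↦ ?_
    rw [Matrix.sub_apply, Matrix.smul_apply, RCLike.real_smul_eq_coe_mul]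
    ring
  rw [hsplit, sub_nonneg] at hquad
  have hsq : ‖Finsupp.linearCombination 𝕜 v x‖ ^ 2
      ≤ C * ‖Finsupp.linearCombination 𝕜 ξ x‖ ^ 2 := by exact_mod_cast hquad
  calc ‖Finsupp.linearCombination 𝕜 v x‖ ≤ √(C * ‖Finsupp.linearCombination 𝕜 ξ x‖ ^ 2) :=
        Real.le_sqrt_of_sq_le hsq
    _ = √C * ‖Finsupp.linearCombination 𝕜 ξ x‖ := by
        rw [Real.sqrt_mul' _ (sq_nonneg _), Real.sqrt_sq (norm_nonneg _)]

lemma exists_clm_of_gram_le [CompleteSpace E] [CompleteSpace V] {ξ : ι → E} {v : ι → V} {C : ℝ}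
    (h : (C • gram 𝕜 ξ - gram 𝕜 v).PosSemidef) : ∃ S : E →L[𝕜] V, ∀ i, S (ξ i) = v i := by
  let K := (Submodule.span 𝕜 (range ξ)).topologicalClosure
  have hmem : ∀ x, Finsupp.linearCombination 𝕜 ξ x ∈ K := fun x ↦
    subset_closure (Finsupp.range_linearCombination 𝕜 (v := ξ) ▸ LinearMap.mem_range_self _ x)
  let e : (ι →₀ 𝕜) →ₗ[𝕜] K := (Finsupp.linearCombination 𝕜 ξ).codRestrict K hmem
  have hdense : DenseRange e := by
    rw [DenseRange, Subtype.dense_iff, ← range_comp]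
    have hrange : range (Subtype.val ∘ e) = (Submodule.span 𝕜 (range ξ) : Set E) := by
      rw [← Finsupp.range_linearCombination, LinearMap.coe_range]
      rfl
    exact (congrArg closure hrange).ge
  let S := (Finsupp.linearCombination 𝕜 v).extendOfNorm e
  have hS : ∀ x, S (e x) = Finsupp.linearCombination 𝕜 v x :=
    LinearMap.extendOfNorm_eq hdense ⟨√C, norm_linearCombination_le_of_gram_le h⟩
  refine ⟨S ∘L K.orthogonalProjectionOnto, fun i ↦ ?_⟩
  have hξ : K.orthogonalProjectionOnto (ξ i) = e (Finsupp.single i 1) := by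
    have hi : (e (Finsupp.single i 1) : E) = ξ i := by simp [e]
    rw [← hi, Submodule.orthogonalProjectionOnto_mem_subspace_eq_self]
  rw [ContinuousLinearMap.comp_apply, hξ, hS, Finsupp.linearCombination_single, one_smul]

lemma exists_gram_eq_of_posSemidef {ι : Type u} {𝕜 : Type v} [RCLike 𝕜] {c : Matrix ι ι 𝕜}
    (hc : c.PosSemidef) :
    ∃ (V : Type (max u v)) (_ : NormedAddCommGroup V) (_ : InnerProductSpace 𝕜 V)
      (_ : CompleteSpace V) (v : ι → V), gram 𝕜 v = c := by
  let K : Matrix ι ι (𝕜 →L[𝕜] 𝕜) := c.map fun a ↦ a • 1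
  have hK : K.PosSemidef := by
    refine ((RKHS.posSemidef_tfae (𝕜 := 𝕜)).out 0 2).mpr (⟨?_, fun x ↦ ?_⟩ : _ ∧ _)
    · ext i j : 1
      simp [K, ← hc.1.apply i j]
    · have hinner : ∀ (i j : ι) (a d : 𝕜), inner 𝕜 (K j i a) d = star a * c i j * d := by
        intro i j a d
        simp [K, ← hc.1.apply i j, mul_comm]
      simp only [hinner]
      simpa only [map_zero] using (RCLike.le_iff_re_im.mp (hc.2 x)).1
  have : Fact K.PosSemidef := ⟨hK⟩
  refine ⟨RKHS.OfKernel K, inferInstance, inferInstance, inferInstance,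
    fun i ↦ RKHS.kerFun (RKHS.OfKernel K) i 1, ?_⟩
  ext i j
  have hkernel := RKHS.kernel_inner (H := RKHS.OfKernel K) (𝕜 := 𝕜) j i (1 : 𝕜) (1 : 𝕜)
  rw [gram_apply, ← hkernel, RKHS.OfKernel.kernel_ofKernel]
  simp [K, ← hc.1.apply i j]

end Gram

section Elliptope

open Matrix
open scoped ComplexOrder

lemma eq_zero_of_add_mem_of_sub_mem_extremePoints {V : Type*} [AddCommGroup V] [Module ℝ V]
    {A : Set V} {x y : V} (hx : x ∈ A.extremePoints ℝ) (hadd : x + y ∈ A) (hsub : x - y ∈ A) :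
    y = 0 := by
  have hmid : x ∈ openSegment ℝ (x + y) (x - y) :=
    ⟨1 / 2, 1 / 2, by norm_num, by norm_num, by norm_num, by module⟩
  simpa using (mem_extremePoints_iff_left.mp hx).2 _ hadd _ hsub hmid

variable {ι E : Type*} [NormedAddCommGroup E] [InnerProductSpace ℂ E]

/-- The elliptope over `ι`: correlation matrices, i.e. positive semidefinite matrices with unit
diagonal. The index type may be infinite; positivity is tested on finitely supported vectors. -/
def correlationMatrices (ι : Type*) : Set (Matrix ι ι ℂ) :=
  {c | c.PosSemidef ∧ ∀ i, c i i = 1}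

lemma gram_mem_correlationMatrices_iff {ξ : ι → E} :
    gram ℂ ξ ∈ correlationMatrices ι ↔ ∀ i, ‖ξ i‖ = 1 := by
  refine (and_iff_right (posSemidef_gram' ξ)).trans (forall_congr' fun i ↦ ?_)
  rw [gram_apply, inner_self_eq_norm_sq_to_K, RCLike.ofReal_eq_complex_ofReal,
    ← Complex.ofReal_pow, Complex.ofReal_eq_one,
    pow_eq_one_iff_of_nonneg (norm_nonneg _) two_ne_zero]

/-- The matrix `⟪ξ k, A (ξ l)⟫` of the sesquilinear form of the operator `A` along a family `ξ`
which need not be orthogonal or linearly independent. -/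
noncomputable def formMatrix (ξ : ι → E) : (E →L[ℂ] E) →ₗ[ℂ] Matrix ι ι ℂ where
  toFun A := .of fun k l ↦ ⟪ξ k, A (ξ l)⟫
  map_add' A B := by ext; simp
  map_smul' a A := by ext; simp

@[simp]
lemma formMatrix_apply (ξ : ι → E) (A : E →L[ℂ] E) (k l : ι) :
    formMatrix ξ A k l = ⟪ξ k, A (ξ l)⟫ := rfl

lemma formMatrix_one (ξ : ι → E) : formMatrix ξ 1 = gram ℂ ξ := rfl

variable [CompleteSpace E]

lemma formMatrix_star_mul_self (ξ : ι → E) (S : E →L[ℂ] E) :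
    formMatrix ξ (star S * S) = gram ℂ (S ∘ ξ) := by
  ext k l
  simp [ContinuousLinearMap.star_eq_adjoint, ContinuousLinearMap.adjoint_inner_right]

lemma posSemidef_formMatrix {T : E →L[ℂ] E} (hT : T.IsPositive) (ξ : ι → E) :
    (formMatrix ξ T).PosSemidef := by
  obtain ⟨S, rfl⟩ := CStarAlgebra.nonneg_iff_eq_star_mul_self.mp
    ((ContinuousLinearMap.nonneg_iff_isPositive T).mpr hT)
  rw [formMatrix_star_mul_self]
  exact posSemidef_gram' _

lemma gram_add_formMatrix_mem_correlationMatrices {ξ : ι → E} (hξ : ∀ i, ‖ξ i‖ = 1)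
    {A : E →L[ℂ] E} (hA : IsSelfAdjoint A) (hnorm : ‖A‖ ≤ 1) (hdiag : (formMatrix ξ A).diag = 0) :
    gram ℂ ξ + formMatrix ξ A ∈ correlationMatrices ι := by
  have hpos : (1 + A).IsPositive := by
    rw [← ContinuousLinearMap.nonneg_iff_isPositive, ← neg_le_iff_add_nonneg']
    calc -1 ≤ -algebraMap ℝ (E →L[ℂ] E) ‖A‖ := by
          rw [neg_le_neg_iff, ← map_one (algebraMap ℝ (E →L[ℂ] E))]
          exact algebraMap_mono _ hnorm
      _ ≤ A := hA.neg_algebraMap_norm_le_self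
  refine ⟨by simpa [formMatrix_one] using posSemidef_formMatrix hpos ξ, fun i ↦ ?_⟩
  rw [Matrix.add_apply, (gram_mem_correlationMatrices_iff.mpr hξ).2 i,
    ← diag_apply (formMatrix ξ A), hdiag, Pi.zero_apply, add_zero]

lemma formMatrix_eq_zero_of_isSelfAdjoint {ξ : ι → E}
    (hext : gram ℂ ξ ∈ (correlationMatrices ι).extremePoints ℝ) {A : E →L[ℂ] E}
    (hA : IsSelfAdjoint A) (hdiag : (formMatrix ξ A).diag = 0) : formMatrix ξ A = 0 := by
  obtain rfl | hA0 := eq_or_ne A 0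
  · exact map_zero _
  have hξ := gram_mem_correlationMatrices_iff.mp hext.1
  set A₁ : E →L[ℂ] E := ‖A‖⁻¹ • A with hdef
  have hform : formMatrix ξ A₁ = ‖A‖⁻¹ • formMatrix ξ A := LinearMap.map_smul_of_tower _ _ _
  have hA₁ : IsSelfAdjoint A₁ := (IsSelfAdjoint.all _).smul hA
  have hnorm : ‖A₁‖ ≤ 1 := by
    rw [hdef, norm_smul, norm_inv, norm_norm, inv_mul_cancel₀ (norm_ne_zero_iff.mpr hA0)]
  have hdiag₁ : (formMatrix ξ A₁).diag = 0 := by rw [hform, diag_smul, hdiag, smul_zero]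
  have hzero : formMatrix ξ A₁ = 0 := by
    refine eq_zero_of_add_mem_of_sub_mem_extremePoints hext
      (gram_add_formMatrix_mem_correlationMatrices hξ hA₁ hnorm hdiag₁) ?_
    rw [sub_eq_add_neg, ← map_neg]
    exact gram_add_formMatrix_mem_correlationMatrices hξ hA₁.neg (by rwa [norm_neg])
      (by rw [map_neg, diag_neg, hdiag₁, neg_zero])
  rw [hform] at hzero
  exact (smul_eq_zero.mp hzero).resolve_left (inv_ne_zero (norm_ne_zero_iff.mpr hA0))

lemma formMatrix_star (ξ : ι → E) (A : E →L[ℂ] E) :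
    formMatrix ξ (star A) = (formMatrix ξ A)ᴴ := by
  ext k l
  simp [ContinuousLinearMap.star_eq_adjoint, ContinuousLinearMap.adjoint_inner_right]

open scoped ComplexStarModule in
lemma formMatrix_eq_zero_of_gram_mem_extremePoints {ξ : ι → E}
    (hext : gram ℂ ξ ∈ (correlationMatrices ι).extremePoints ℝ) {A : E →L[ℂ] E}
    (hdiag : (formMatrix ξ A).diag = 0) : formMatrix ξ A = 0 := by
  have hdiag_star : (formMatrix ξ (star A)).diag = 0 := by
    rw [formMatrix_star, diag_conjTranspose, hdiag, star_zero]
  have hre : formMatrix ξ (ℜ A : E →L[ℂ] E) = 0 := by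
    refine formMatrix_eq_zero_of_isSelfAdjoint hext (ℜ A).2 ?_
    rw [realPart_apply_coe, LinearMap.map_smul_of_tower, map_add, diag_smul, diag_add, hdiag,
      hdiag_star, add_zero, smul_zero]
  have him : formMatrix ξ (ℑ A : E →L[ℂ] E) = 0 := by
    refine formMatrix_eq_zero_of_isSelfAdjoint hext (ℑ A).2 ?_
    rw [imaginaryPart_apply_coe, map_smul, LinearMap.map_smul_of_tower, map_sub, diag_smul,
      diag_smul, diag_sub, hdiag, hdiag_star, sub_zero, smul_zero, smul_zero]
  rw [← realPart_add_I_smul_imaginaryPart A, map_add, map_smul, hre, him, smul_zero, add_zero]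

theorem gram_mem_extremePoints_iff {ξ : ι → E} (hξ : ∀ i, ‖ξ i‖ = 1) :
    gram ℂ ξ ∈ (correlationMatrices ι).extremePoints ℝ ↔
      ∀ A : E →L[ℂ] E, (formMatrix ξ A).diag = 0 → formMatrix ξ A = 0 := by
  refine ⟨fun hext A ↦ formMatrix_eq_zero_of_gram_mem_extremePoints hext, fun h ↦ ?_⟩
  have hgram := gram_mem_correlationMatrices_iff.mpr hξ
  rw [mem_extremePoints_iff_left]
  refine ⟨hgram, ?_⟩
  rintro c₁ hc₁ c₂ hc₂ ⟨a, d, ha, hd, -, hsum⟩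
  obtain ⟨V, _, _, _, v, rfl⟩ := exists_gram_eq_of_posSemidef hc₁.1
  have hle : (a⁻¹ • gram ℂ ξ - gram ℂ v).PosSemidef := by
    rw [← hsum, smul_add, inv_smul_smul₀ ha.ne', add_sub_cancel_left, smul_smul]
    exact hc₂.1.smul (by positivity)
  obtain ⟨S, hS⟩ := exists_clm_of_gram_le hle
  have hform : formMatrix ξ (S.adjoint ∘L S - 1) = gram ℂ v - gram ℂ ξ := by
    ext k l
    simp [ContinuousLinearMap.adjoint_inner_right, hS]
  rw [← sub_eq_zero, ← hform]
  refine h _ ?_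
  ext i
  rw [hform, diag_apply, Matrix.sub_apply, hc₁.2 i, hgram.2 i, sub_self, Pi.zero_apply]

end Elliptope

section Compression

variable {ι E : Type*} [NormedAddCommGroup E] [InnerProductSpace ℂ E]
  [CompleteSpace E]

lemma starProjection_closure_span_apply (ξ : ι → E) (i : ι) :
    (Submodule.span ℂ (range ξ)).topologicalClosure.starProjection (ξ i) = ξ i :=
  Submodule.starProjection_eq_self_iff.mpr
    (Submodule.le_topologicalClosure _ (Submodule.subset_span (mem_range_self i)))

lemma formMatrix_eq_zero_iff {ξ : ι → E} {A : E →L[ℂ] E} :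
    letI P := (Submodule.span ℂ (range ξ)).topologicalClosure.starProjection
    formMatrix ξ A = 0 ↔ P ∘L A ∘L P = 0 := by
  set K := (Submodule.span ℂ (range ξ)).topologicalClosure with hK
  refine ⟨fun hA ↦ ?_, fun hA ↦ ?_⟩
  · have hperp : ∀ l, A (ξ l) ∈ Kᗮ := fun l ↦ by
      have hspan : Submodule.span ℂ (range ξ) ≤ (ℂ ∙ A (ξ l))ᗮ := by
        rw [Submodule.span_le]
        rintro _ ⟨k, rfl⟩
        exact Submodule.mem_orthogonal_singleton_iff_inner_left.mpr (congrFun₂ hA k l)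
      rw [hK, Submodule.orthogonal_closure]
      exact fun u hu ↦ Submodule.mem_orthogonal_singleton_iff_inner_left.mp (hspan hu)
    have hker : K ≤ (K.starProjection ∘L A).ker := by
      refine Submodule.topologicalClosure_minimal _ (Submodule.span_le.mpr ?_)
        (ContinuousLinearMap.isClosed_ker _)
      rintro _ ⟨l, rfl⟩
      have hmem := hperp l
      rwa [← Submodule.ker_starProjection] at hmem
    ext v
    exact hker (Submodule.starProjection_apply_mem _ _)
  · ext k l
    rw [formMatrix_apply, ← starProjection_closure_span_apply ξ k,
      ← starProjection_closure_span_apply ξ l, Submodule.inner_starProjection_left_eq_right]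
    exact (congrArg (inner ℂ (ξ k)) (DFunLike.congr_fun hA (ξ l))).trans (inner_zero_right _)

lemma forall_compression_eq_zero_iff (ξ : ι → E) :
    letI K := (Submodule.span ℂ (range ξ)).topologicalClosure
    (∀ A : E →L[ℂ] E, (∀ v, A v ∈ K) → (∀ v ∈ Kᗮ, A v = 0) → (∀ i, ⟪ξ i, A (ξ i)⟫ = 0) → A = 0) ↔
      ∀ A : E →L[ℂ] E, (formMatrix ξ A).diag = 0 → formMatrix ξ A = 0 := by
  set K := (Submodule.span ℂ (range ξ)).topologicalClosure
  refine ⟨fun h A hA ↦ ?_, fun h A hrange hker hA ↦ ?_⟩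
  · refine formMatrix_eq_zero_iff.mpr (h _ (fun v ↦ Submodule.starProjection_apply_mem _ _)
      (fun v hv ↦ ?_) (fun i ↦ ?_))
    · have hv0 : K.starProjection v = 0 := by rwa [← Submodule.ker_starProjection] at hv
      change K.starProjection (A (K.starProjection v)) = 0
      rw [hv0, map_zero, map_zero]
    · calc ⟪ξ i, K.starProjection (A (K.starProjection (ξ i)))⟫ = ⟪ξ i, A (ξ i)⟫ := by
            rw [← Submodule.inner_starProjection_left_eq_right,
              starProjection_closure_span_apply]
        _ = 0 := congrFun hA i
  · have hzero := formMatrix_eq_zero_iff.mp (h A (funext hA))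
    ext v
    calc A v = A (K.starProjection v) := by
          rw [← sub_eq_zero, ← map_sub, hker _ (Submodule.sub_starProjection_mem_orthogonal v)]
      _ = K.starProjection (A (K.starProjection v)) :=
          (Submodule.starProjection_eq_self_iff.mpr (hrange _)).symm
      _ = 0 := DFunLike.congr_fun hzero v

end Compression

section Characters

variable {G : Type*} [CommGroup G] [TopologicalSpace G]

lemma continuous_coe_character (χ : G →ₜ* Circle) : Continuous fun z ↦ (χ z : ℂ) :=
  continuous_subtype_val.comp χ.continuous_toFun

variable [MeasurableSpace G] [BorelSpace G]

lemma integrable_character (χ : G →ₜ* Circle) (ν : Measure G) [IsFiniteMeasure ν] :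
    Integrable (fun z ↦ (χ z : ℂ)) ν :=
  .of_bound (continuous_coe_character χ).aestronglyMeasurable 1
    (.of_forall fun z ↦ (Circle.norm_coe (χ z)).le)

lemma exists_setIntegral_character_ne_zero (χ : G →ₜ* Circle) (ν : Measure G) [IsFiniteMeasure ν]
    [NeZero ν] : ∃ B, MeasurableSet B ∧ ∫ z in B, (χ z : ℂ) ∂ν ≠ 0 := by
  by_contra! h
  have hzero : (fun z ↦ (χ z : ℂ)) =ᵐ[ν] 0 := ae_eq_zero_of_forall_setIntegral_eq_of_sigmaFinite
    (fun _ _ _ ↦ (integrable_character χ ν).integrableOn) (fun B hB _ ↦ h B hB)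
  obtain ⟨z, hz⟩ := hzero.exists
  exact Circle.coe_ne_zero (χ z) hz

variable [IsTopologicalGroup G] (χ : G →ₜ* Circle) (μ : Measure G) [μ.IsMulLeftInvariant]

lemma setIntegral_image_mul_left_character (w : G) (B : Set G) :
    ∫ z in (w * ·) '' B, (χ z : ℂ) ∂μ = χ w * ∫ z in B, (χ z : ℂ) ∂μ := by
  rw [(measurePreserving_mul_left μ w).setIntegral_image_emb (measurableEmbedding_mulLeft w),
    ← integral_const_mul]
  simp only [map_mul, Circle.coe_mul]

variable {χ} in
lemma integral_character_eq_zero (hχ : χ ≠ 1) : ∫ z, (χ z : ℂ) ∂μ = 0 := by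
  obtain ⟨w, hw⟩ := DFunLike.ne_iff.mp hχ
  have hinv := setIntegral_image_mul_left_character χ μ w univ
  rw [image_univ_of_surjective (mul_left_surjective w), setIntegral_univ] at hinv
  by_contra h
  exact hw (Circle.ext (mul_right_cancel₀ h (hinv.symm.trans (one_mul _).symm)))

end Characters

section Equivariant

variable {Ω : Type*} [MeasurableSpace Ω]

lemma exists_complexMeasure_apply_eq_sum (ν : ComplexMeasure Ω) :
    ∃ m : Fin 4 → Measure Ω, (∀ j, IsFiniteMeasure (m j)) ∧
      ∀ B, MeasurableSet B → ν B = ∑ j : Fin 4, Complex.I ^ (j : ℕ) * ((m j).real B : ℂ) := by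
  let r := (ComplexMeasure.re ν).toJordanDecomposition
  let s := (ComplexMeasure.im ν).toJordanDecomposition
  refine ⟨![r.posPart, s.posPart, r.negPart, s.negPart], fun j ↦ ?_, fun B hB ↦ ?_⟩
  · fin_cases j <;> dsimp <;> infer_instance
  · have hre : (ν B).re = r.posPart.real B - r.negPart.real B := by
      rw [← Measure.toSignedMeasure_sub_apply hB]
      exact (DFunLike.congr_fun (SignedMeasure.toSignedMeasure_toJordanDecomposition
        (ComplexMeasure.re ν)) B).symm
    have him : (ν B).im = s.posPart.real B - s.negPart.real B := by
      rw [← Measure.toSignedMeasure_sub_apply hB]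
      exact (DFunLike.congr_fun (SignedMeasure.toSignedMeasure_toJordanDecomposition
        (ComplexMeasure.im ν)) B).symm
    rw [← Complex.re_add_im (ν B), hre, him]
    simp [Fin.sum_univ_four, Complex.I_pow_three]
    ring

variable {G : Type*} [CommGroup G] [TopologicalSpace G] [IsTopologicalGroup G]
  [MeasurableSpace G] [BorelSpace G]

lemma integral_character_mul_indicator (χ : G →ₜ* Circle) (ν : Measure G) {B : Set G}
    (hB : MeasurableSet B) (w : G) :
    ∫ z, (χ w : ℂ) * B.indicator 1 (w * z) ∂ν = χ w * ν.real ((w⁻¹ * ·) '' B) := by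
  have hpre : (w⁻¹ * ·) '' B = (w * ·) ⁻¹' B := by simp
  rw [integral_const_mul, hpre, ← mul_one (ν.real _ : ℂ), ← Complex.real_smul,
    ← integral_indicator_const _ (measurable_const_mul w hB)]
  rfl

variable [SecondCountableTopology G] (χ : G →ₜ* Circle) (μ ν : Measure G) [IsFiniteMeasure μ]
  [IsFiniteMeasure ν]

lemma integrable_character_mul_indicator {B : Set G} (hB : MeasurableSet B) :
    Integrable (fun p : G × G ↦ (χ p.1 : ℂ) * B.indicator 1 (p.1 * p.2)) (μ.prod ν) := by
  have hmeas : Measurable fun p : G × G ↦ (χ p.1 : ℂ) * B.indicator 1 (p.1 * p.2) :=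
    ((continuous_coe_character χ).measurable.comp measurable_fst).mul
      ((measurable_one.indicator hB).comp measurable_mul)
  refine .of_bound hmeas.aestronglyMeasurable 1 (.of_forall fun p ↦ ?_)
  rw [norm_mul, Circle.norm_coe, one_mul]
  exact (norm_indicator_le_norm_self _ _).trans norm_one.le

lemma integrable_character_mul_measureReal {B : Set G} (hB : MeasurableSet B) :
    Integrable (fun w ↦ (χ w : ℂ) * ν.real ((w⁻¹ * ·) '' B)) μ := by
  simpa only [integral_character_mul_indicator χ ν hB] using
    (integrable_character_mul_indicator χ μ ν hB).integral_prod_left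

lemma integral_character_mul_measureReal [μ.IsMulLeftInvariant] {B : Set G}
    (hB : MeasurableSet B) :
    ∫ w, (χ w : ℂ) * ν.real ((w⁻¹ * ·) '' B) ∂μ
      = (∫ z, (χ z : ℂ)⁻¹ ∂ν) * ∫ z in B, (χ z : ℂ) ∂μ := by
  simp only [← integral_character_mul_indicator χ ν hB]
  rw [integral_integral_swap (integrable_character_mul_indicator χ μ ν hB), ← integral_mul_const]
  refine integral_congr_ae (.of_forall fun z ↦ ?_)
  dsimp only
  rw [← integral_const_mul, ← integral_indicator hB,
    ← integral_mul_right_eq_self (μ := μ) (B.indicator _) z]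
  refine integral_congr_ae (.of_forall fun w ↦ ?_)
  by_cases hw : w * z ∈ B
  · dsimp only
    rw [indicator_of_mem hw, indicator_of_mem hw, map_mul, Circle.coe_mul, Pi.one_apply, mul_one,
      mul_comm (χ w : ℂ), inv_mul_cancel_left₀ (Circle.coe_ne_zero _)]
  · simp [indicator_of_notMem hw]

/- Averaging `χ w * ν (w⁻¹ B) = ν B` over `w` against `μ` and applying Fubini replaces `ν` by a
multiple of `χ • μ`. -/
theorem exists_complexMeasure_apply_eq_mul_setIntegral [IsProbabilityMeasure μ]
    [μ.IsMulLeftInvariant] {ν : ComplexMeasure G}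
    (hν : ∀ w B, MeasurableSet B → ν ((w * ·) '' B) = χ w * ν B) :
    ∃ c : ℂ, ∀ B, MeasurableSet B → ν B = c * ∫ z in B, (χ z : ℂ) ∂μ := by
  obtain ⟨m, hm, hsum⟩ := exists_complexMeasure_apply_eq_sum ν
  refine ⟨∑ j : Fin 4, Complex.I ^ (j : ℕ) * ∫ z, (χ z : ℂ)⁻¹ ∂(m j), fun B hB ↦ ?_⟩
  have htranslate : ∀ w, ∑ j : Fin 4, Complex.I ^ (j : ℕ) *
      ((χ w : ℂ) * (m j).real ((w⁻¹ * ·) '' B)) = ν B := fun w ↦ by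
    have hB' : MeasurableSet ((w⁻¹ * ·) '' B) :=
      (measurableEmbedding_mulLeft w⁻¹).measurableSet_image.mpr hB
    calc ∑ j : Fin 4, Complex.I ^ (j : ℕ) * ((χ w : ℂ) * (m j).real ((w⁻¹ * ·) '' B))
        = χ w * ν ((w⁻¹ * ·) '' B) := by
          rw [hsum _ hB', Finset.mul_sum]
          exact Finset.sum_congr rfl fun j _ ↦ mul_left_comm _ _ _
      _ = ν B := by rw [← hν w _ hB', image_image]; simp
  calc ν B = ∫ _w, ν B ∂μ := by simp
    _ = ∑ j : Fin 4, Complex.I ^ (j : ℕ) *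
          ∫ w, (χ w : ℂ) * (m j).real ((w⁻¹ * ·) '' B) ∂μ := by
        rw [integral_congr_ae (.of_forall fun w ↦ (htranslate w).symm),
          integral_finsetSum _ fun j _ ↦
            (integrable_character_mul_measureReal χ μ (m j) hB).const_mul _]
        simp only [integral_const_mul]
    _ = _ := by
        simp only [integral_character_mul_measureReal χ μ _ hB, Finset.sum_mul, mul_assoc]

end Equivariant

section Density

open scoped ComplexOrder

variable {X : Type*} [TopologicalSpace X] [MeasurableSpace X] {μ : Measure X}

lemma nonneg_of_continuous_of_forall_setIntegral_nonneg [μ.IsOpenPosMeasure] {f : X → ℂ}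
    (hf : Continuous f) (hint : Integrable f μ)
    (h : ∀ B, MeasurableSet B → 0 ≤ ∫ x in B, f x ∂μ) : 0 ≤ f := by
  have hreal : ∀ g : X → ℝ, Continuous g → Integrable g μ →
      (∀ B, MeasurableSet B → 0 ≤ ∫ x in B, g x ∂μ) → ∀ x, 0 ≤ g x := fun g hg hgint hpos ↦ by
    have hae := ae_nonneg_of_forall_setIntegral_nonneg hgint fun B hB _ ↦ hpos B hB
    exact (Measure.dense_of_ae hae).induction (fun _ h ↦ h) (isClosed_Ici.preimage hg)
  have hre : ∀ B, ∫ x in B, (f x).re ∂μ = (∫ x in B, f x ∂μ).re := fun B ↦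
    integral_re hint.integrableOn
  have him : ∀ B, ∫ x in B, (f x).im ∂μ = (∫ x in B, f x ∂μ).im := fun B ↦
    integral_im hint.integrableOn
  have him0 : ∀ B, MeasurableSet B → ∫ x in B, (f x).im ∂μ = 0 := fun B hB ↦
    (him B).trans (Complex.nonneg_iff.mp (h B hB)).2.symm
  have hf_re := hreal _ (Complex.continuous_re.comp hf) hint.re fun B hB ↦
    (Complex.nonneg_iff.mp (h B hB)).1.trans_eq (hre B).symm
  have hf_im := hreal _ (Complex.continuous_im.comp hf) hint.im fun B hB ↦ (him0 B hB).ge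
  have hf_neg_im := hreal _ (Complex.continuous_im.comp hf).neg hint.im.neg fun B hB ↦ by
    simpa [integral_neg] using (him0 B hB).le
  exact fun x ↦ Complex.nonneg_iff.mpr
    ⟨hf_re x, (hf_im x).antisymm (neg_nonneg.mp (hf_neg_im x))⟩

end Density

section Operators

variable {ι E : Type*} [NormedAddCommGroup E] [InnerProductSpace ℂ E]

lemma finsuppSum_formMatrix (ξ : ι → E) (A : E →L[ℂ] E) (x : ι →₀ ℂ) :
    (x.sum fun i xi ↦ x.sum fun j xj ↦ star xi * formMatrix ξ A i j * xj)
      = ⟪Finsupp.linearCombination ℂ ξ x, A (Finsupp.linearCombination ℂ ξ x)⟫ := by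
  rw [Finsupp.linearCombination_apply, map_finsuppSum, Finsupp.sum_inner]
  simp only [Finsupp.inner_sum, map_smul, inner_smul_left, inner_smul_right, formMatrix_apply,
    RCLike.star_def]
  exact Finsupp.sum_congr fun i _ ↦ Finsupp.sum_congr fun j _ ↦ by ring

lemma formMatrix_hilbertBasis_injective (b : HilbertBasis ι ℂ E) :
    Function.Injective (formMatrix b) := fun S T h ↦ by
  refine ContinuousLinearMap.ext_on
    (Submodule.dense_iff_topologicalClosure_eq_top.mpr b.dense_span) ?_
  rintro _ ⟨l, rfl⟩
  refine b.repr.injective (lp.ext (funext fun k ↦ ?_))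
  simpa only [b.repr_apply_apply, formMatrix_apply] using congrFun₂ h k l

end Operators

namespace POVM

variable {Ω H : Type*} [MeasurableSpace Ω] [NormedAddCommGroup H] [InnerProductSpace ℂ H]
  [CompleteSpace H]

open Classical in
/-- The complex measure `B ↦ ⟪φ, M(B) ψ⟫` of a POVM; vector measures vanish on non-measurable sets,
where a POVM is unconstrained. -/
noncomputable def complexMeasure (M : POVM Ω H) (φ ψ : H) : ComplexMeasure Ω where
  measureOf' B := if MeasurableSet B then ⟪φ, M.toFun B ψ⟫ else 0
  empty' := by
    have hsum := (M.m_iUnion (fun _ ↦ ∅) (fun _ ↦ .empty)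
      (fun _ _ _ ↦ disjoint_bot_left) φ ψ).summable
    rw [if_pos .empty, (summable_const_iff _).mp hsum]
  not_measurable' _ hB := if_neg hB
  m_iUnion' B hB hdisj := by
    simpa only [if_pos (hB _), if_pos (MeasurableSet.iUnion hB)] using M.m_iUnion B hB hdisj φ ψ

lemma complexMeasure_apply (M : POVM Ω H) (φ ψ : H) {B : Set Ω} (hB : MeasurableSet B) :
    M.complexMeasure φ ψ B = ⟪φ, M.toFun B ψ⟫ := if_pos hB

section OfIsometry

variable {E : Type*} [NormedAddCommGroup E] [InnerProductSpace ℂ E] [CompleteSpace E]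
  {μ : Measure Ω}

/-- The operator `(R_B J)† (R_B J)`, where `R_B : L²(μ, E) → L²(μ|_B, E)` is the restriction map:
the compression along `J` of multiplication by the indicator function of `B`. -/
noncomputable def compressIndicator (J : H →ₗᵢ[ℂ] Lp E 2 μ) (B : Set Ω) : H →L[ℂ] H :=
  letI R := LpToLpRestrictCLM Ω E ℂ μ 2 B ∘L J.toContinuousLinearMap
  R.adjoint ∘L R

lemma inner_compressIndicator (J : H →ₗᵢ[ℂ] Lp E 2 μ) (B : Set Ω) (φ ψ : H) :
    ⟪φ, compressIndicator J B ψ⟫ = ∫ z in B, ⟪J φ z, J ψ z⟫ ∂μ := by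
  rw [compressIndicator, ContinuousLinearMap.comp_apply, ContinuousLinearMap.adjoint_inner_right,
    L2.inner_def]
  refine integral_congr_ae ?_
  filter_upwards [LpToLpRestrictCLM_coeFn ℂ B (J φ), LpToLpRestrictCLM_coeFn ℂ B (J ψ)]
    with z hφ hψ
  exact congrArg₂ _ hφ hψ

/-- The POVM obtained by compressing the canonical projection-valued measure of `L²(μ, E)` along
the isometry `J`. -/
noncomputable def ofIsometry (J : H →ₗᵢ[ℂ] Lp E 2 μ) : POVM Ω H where
  toFun := compressIndicator J
  isPositive _ _ := ContinuousLinearMap.isPositive_adjoint_comp_self _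
  normalized := ContinuousLinearMap.ext fun ψ ↦ ext_inner_left ℂ fun φ ↦ by
    rw [inner_compressIndicator, setIntegral_univ, ← L2.inner_def, J.inner_map_map]
    rfl
  m_iUnion B hB hdisj φ ψ := by
    simp only [inner_compressIndicator]
    exact hasSum_integral_iUnion hB hdisj (L2.integrable_inner (J φ) (J ψ)).integrableOn

end OfIsometry

section IsCovariant

variable {G : Type*} [Mul G] [MeasurableSpace G]

/-- Covariance of a POVM on a group `G`: `U(w) M(B) U(w)* = M(w·B)`. -/
def IsCovariant (U : G → (H ≃ₗᵢ[ℂ] H)) (M : POVM G H) : Prop :=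
  ∀ w : G, ∀ B : Set G, MeasurableSet B → ∀ φ ψ : H,
    ⟪(U w φ : H), M.toFun ((fun z ↦ w * z) '' B) (U w ψ)⟫ = ⟪φ, M.toFun B ψ⟫

/-- `M` cannot be decomposed nontrivially as a convex combination of `U`-covariant POVMs; for a
`U`-covariant `M` this says that `M` is an extreme point of the convex set of such POVMs. POVMs are
compared on measurable sets only. -/
def IsExtremeCovariant (U : G → (H ≃ₗᵢ[ℂ] H)) (M : POVM G H) : Prop :=
  ∀ M₁ M₂ : POVM G H, M₁.IsCovariant U → M₂.IsCovariant U → ∀ t : ℝ, 0 < t → t < 1 →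
    (∀ B : Set G, MeasurableSet B →
      M.toFun B = (t : ℂ) • M₁.toFun B + ((1 - t : ℝ) : ℂ) • M₂.toFun B) →
    ∀ B : Set G, MeasurableSet B → M₁.toFun B = M.toFun B ∧ M₂.toFun B = M.toFun B

end IsCovariant

end POVM

section PhaseMatrix

open Matrix
open scoped ComplexOrder

variable {ι G H : Type*} [CommGroup G] [TopologicalSpace G] [MeasurableSpace G]
  [NormedAddCommGroup H] [InnerProductSpace ℂ H]

/-- `c` is the phase matrix of the operator-valued set function `T`: in the basis `b`, the matrix of
`T(B)` is the entrywise product of `c` with `∫_B χ_k / χ_l dμ`. -/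
def IsPhaseMatrix (b : HilbertBasis ι ℂ H) (χ : ι → G →ₜ* Circle) (μ : Measure G)
    (T : Set G → H →L[ℂ] H) (c : Matrix ι ι ℂ) : Prop :=
  ∀ k l B, MeasurableSet B → ⟪b k, T B (b l)⟫ = c k l * ∫ z in B, ((χ k / χ l) z : ℂ) ∂μ

variable {b : HilbertBasis ι ℂ H} {χ : ι → G →ₜ* Circle} {μ : Measure G}
  {T T₁ T₂ : Set G → H →L[ℂ] H} {c c₁ c₂ : Matrix ι ι ℂ}

namespace IsPhaseMatrix

lemma smul_add_smul (h₁ : IsPhaseMatrix b χ μ T₁ c₁) (h₂ : IsPhaseMatrix b χ μ T₂ c₂) (a d : ℝ) :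
    IsPhaseMatrix b χ μ (fun B ↦ (a : ℂ) • T₁ B + (d : ℂ) • T₂ B) (a • c₁ + d • c₂) := by
  intro k l B hB
  simp only [_root_.add_apply, _root_.smul_apply, inner_add_right, inner_smul_right, h₁ k l B hB,
    h₂ k l B hB, Matrix.add_apply, Matrix.smul_apply, Complex.real_smul]
  ring

lemma apply_eq (h₁ : IsPhaseMatrix b χ μ T₁ c) (h₂ : IsPhaseMatrix b χ μ T₂ c) {B : Set G}
    (hB : MeasurableSet B) : T₁ B = T₂ B :=
  formMatrix_hilbertBasis_injective b
    (Matrix.ext fun k l ↦ (h₁ k l B hB).trans (h₂ k l B hB).symm)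

lemma adjoint [CompleteSpace H] (h : IsPhaseMatrix b χ μ T c) :
    IsPhaseMatrix b χ μ (fun B ↦ (T B).adjoint) cᴴ := fun k l B hB ↦ by
  have hconj : ∫ z in B, ((χ k / χ l) z : ℂ) ∂μ
      = (starRingEnd ℂ) (∫ z in B, ((χ l / χ k) z : ℂ) ∂μ) := by
    have hinv : ∀ z, ((χ k / χ l) z : ℂ) = (starRingEnd ℂ) ((χ l / χ k) z : ℂ) := fun z ↦ by
      rw [← Circle.coe_inv_eq_conj, ← inv_div (χ l) (χ k)]
      rfl
    simp only [hinv, integral_conj]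
  rw [ContinuousLinearMap.adjoint_inner_right, ← inner_conj_symm, h l k B hB, hconj,
    conjTranspose_apply]
  simp

section NeZero

variable [BorelSpace G] [IsFiniteMeasure μ] [NeZero μ]

lemma unique (h₁ : IsPhaseMatrix b χ μ T c₁) (h₂ : IsPhaseMatrix b χ μ T c₂) : c₁ = c₂ := by
  ext k l
  obtain ⟨B, hB, hne⟩ := exists_setIntegral_character_ne_zero (χ k / χ l) μ
  exact mul_right_cancel₀ hne ((h₁ k l B hB).symm.trans (h₂ k l B hB))

lemma forall_eq_iff (h₁ : IsPhaseMatrix b χ μ T₁ c₁) (h₂ : IsPhaseMatrix b χ μ T₂ c₂) :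
    (∀ B, MeasurableSet B → T₁ B = T₂ B) ↔ c₁ = c₂ := by
  refine ⟨fun h ↦ ?_, ?_⟩
  · exact h₁.unique fun k l B hB ↦ h B hB ▸ h₂ k l B hB
  · rintro rfl B hB
    exact h₁.apply_eq h₂ hB

lemma isHermitian [CompleteSpace H] {M : POVM G H} (h : IsPhaseMatrix b χ μ M.toFun c) :
    c.IsHermitian :=
  (h.adjoint.forall_eq_iff h).mp fun B hB ↦ (M.isPositive B hB).isSelfAdjoint.adjoint_eq

end NeZero

variable [BorelSpace G] [CompleteSpace H] {M : POVM G H} [μ.IsOpenPosMeasure]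

lemma posSemidef [IsFiniteMeasure μ] (h : IsPhaseMatrix b χ μ M.toFun c) : c.PosSemidef := by
  have : NeZero μ := ⟨Measure.measure_univ_ne_zero.mp (isOpen_univ.measure_ne_zero μ univ_nonempty)⟩
  refine ⟨h.isHermitian, fun x ↦ ?_⟩
  let f : G → ℂ := fun z ↦
    x.sum fun k xk ↦ x.sum fun l xl ↦ star xk * (c k l * (χ k / χ l) z) * xl
  have hint_term : ∀ k l, Integrable (fun z ↦ star (x k) * (c k l * (χ k / χ l) z) * x l) μ :=
    fun k l ↦ (((integrable_character _ μ).const_mul _).const_mul _).mul_const _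
  have hf : Continuous f := continuous_finsetSum _ fun k _ ↦ continuous_finsetSum _ fun l _ ↦
    (((continuous_coe_character _).const_mul _).const_mul _).mul_const _
  have hint : Integrable f μ := integrable_finsetSum _ fun k _ ↦ integrable_finsetSum _ fun l _ ↦
    hint_term k l
  have hsetIntegral : ∀ B, MeasurableSet B → ∫ z in B, f z ∂μ
      = ⟪Finsupp.linearCombination ℂ b x, M.toFun B (Finsupp.linearCombination ℂ b x)⟫ := by
    intro B hB
    rw [← finsuppSum_formMatrix]
    simp only [f, Finsupp.sum, formMatrix_apply, h _ _ B hB]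
    rw [integral_finsetSum _ fun k _ ↦
      integrable_finsetSum _ fun l _ ↦ (hint_term k l).integrableOn]
    refine Finset.sum_congr rfl fun k _ ↦ ?_
    rw [integral_finsetSum _ fun l _ ↦ (hint_term k l).integrableOn]
    simp only [integral_const_mul, integral_mul_const]
  have hpos := nonneg_of_continuous_of_forall_setIntegral_nonneg hf hint
    (fun B hB ↦ hsetIntegral B hB ▸ (M.isPositive B hB).inner_nonneg_right _) 1
  simpa [f] using hpos

lemma mem_correlationMatrices [IsProbabilityMeasure μ] (h : IsPhaseMatrix b χ μ M.toFun c) :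
    c ∈ correlationMatrices ι := by
  refine ⟨h.posSemidef, fun i ↦ ?_⟩
  have huniv := h i i univ .univ
  rw [M.normalized, one_apply_eq_self, div_self'] at huniv
  simpa [inner_self_eq_norm_sq_to_K, b.orthonormal.norm_eq_one] using huniv.symm

end IsPhaseMatrix

lemma inner_map_basis {G : Type*} [CommGroup G] [TopologicalSpace G] {U : G → (H ≃ₗᵢ[ℂ] H)}
    {χ : ι → G →ₜ* Circle} (hU : ∀ w i, U w (b i) = (χ i w : ℂ) • b i)
    (S : H →L[ℂ] H) (w : G) (k l : ι) :
    ⟪U w (b k), S (U w (b l))⟫ = (((χ k / χ l) w : Circle) : ℂ)⁻¹ * ⟪b k, S (b l)⟫ := by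
  rw [hU, hU, map_smul, inner_smul_left, inner_smul_right, ← Circle.coe_inv_eq_conj,
    ← Circle.coe_inv, ← mul_assoc, ← Circle.coe_mul]
  congr 2
  change (χ k w)⁻¹ * χ l w = (χ k w / χ l w)⁻¹
  rw [inv_div, div_eq_inv_mul]

section Modulation

variable {V : Type*} [NormedAddCommGroup V] [InnerProductSpace ℂ V] [BorelSpace G]

lemma memLp_character_smul (χ : G →ₜ* Circle) (v : V) (μ : Measure G) [IsFiniteMeasure μ] :
    MemLp (fun z ↦ (χ z : ℂ) • v) 2 μ := by
  have hmeas : AEStronglyMeasurable (fun z ↦ (χ z : ℂ) • v) μ :=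
    (integrable_character χ μ).aestronglyMeasurable.smul_const v
  refine .of_bound hmeas ‖v‖ (.of_forall fun z ↦ ?_)
  rw [norm_smul, Circle.norm_coe, one_mul]

/-- The vector `z ↦ conj (χ z) • v` of `L²(μ, V)`. The conjugate makes the inner products of
such vectors the entries `χ k / χ l` of a phase matrix. -/
noncomputable def modulate (χ : G →ₜ* Circle) (v : V) (μ : Measure G) [IsFiniteMeasure μ] :
    Lp V 2 μ :=
  (memLp_character_smul χ⁻¹ v μ).toLp _

lemma setIntegral_inner_modulate [IsFiniteMeasure μ] (χ₁ χ₂ : G →ₜ* Circle) (v₁ v₂ : V)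
    (B : Set G) :
    ∫ z in B, ⟪modulate χ₁ v₁ μ z, modulate χ₂ v₂ μ z⟫ ∂μ
      = ⟪v₁, v₂⟫ * ∫ z in B, ((χ₁ / χ₂) z : ℂ) ∂μ := by
  rw [← integral_const_mul]
  refine integral_congr_ae (ae_restrict_of_ae ?_)
  filter_upwards [(memLp_character_smul χ₁⁻¹ v₁ μ).coeFn_toLp,
    (memLp_character_smul χ₂⁻¹ v₂ μ).coeFn_toLp] with z h₁ h₂
  have hchar : ((χ₁⁻¹) z)⁻¹ * (χ₂⁻¹) z = (χ₁ / χ₂) z := by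
    change ((χ₁ z)⁻¹)⁻¹ * (χ₂ z)⁻¹ = χ₁ z / χ₂ z
    rw [inv_inv, div_eq_mul_inv]
  rw [modulate, modulate, h₁, h₂, inner_smul_left, inner_smul_right, ← Circle.coe_inv_eq_conj,
    ← mul_assoc, ← Circle.coe_mul, hchar, mul_comm]

variable [IsTopologicalGroup G] [μ.IsMulLeftInvariant] [IsProbabilityMeasure μ]

lemma orthonormal_modulate {v : ι → V} (hχ : Function.Injective χ) (hv : ∀ i, ‖v i‖ = 1) :
    Orthonormal ℂ fun i ↦ modulate (χ i) (v i) μ := by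
  classical
  rw [orthonormal_iff_ite]
  intro k l
  rw [L2.inner_def, ← setIntegral_univ, setIntegral_inner_modulate, setIntegral_univ]
  split_ifs with h
  · subst h
    simp [inner_self_eq_norm_sq_to_K, hv]
  · rw [integral_character_eq_zero μ (div_ne_one.mpr fun hkl ↦ h (hχ hkl)), mul_zero]

lemma exists_isPhaseMatrix_of_mem_correlationMatrices [CompleteSpace H]
    (b : HilbertBasis ι ℂ H) (hχ : Function.Injective χ)
    (hc : c ∈ correlationMatrices ι) : ∃ M : POVM G H, IsPhaseMatrix b χ μ M.toFun c := by
  obtain ⟨V, _, _, _, v, rfl⟩ := exists_gram_eq_of_posSemidef hc.1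
  have hv := gram_mem_correlationMatrices_iff.mp hc
  have horth := (orthonormal_modulate (μ := μ) hχ hv).orthogonalFamily
  let J : H →ₗᵢ[ℂ] Lp V 2 μ := horth.linearIsometry.comp b.repr.toLinearIsometry
  have hJ : ∀ i, J (b i) = modulate (χ i) (v i) μ := fun i ↦ by
    classical
    change horth.linearIsometry (b.repr (b i)) = _
    rw [b.repr_self, OrthogonalFamily.linearIsometry_apply_single]
    simp
  refine ⟨.ofIsometry J, fun k l B _ ↦ ?_⟩
  change ⟪b k, POVM.compressIndicator J B (b l)⟫ = _
  rw [POVM.inner_compressIndicator, hJ, hJ, setIntegral_inner_modulate, gram_apply]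

end Modulation

section Covariance

variable [IsTopologicalGroup G] [BorelSpace G] [μ.IsMulLeftInvariant] [CompleteSpace H]
  {U : G → (H ≃ₗᵢ[ℂ] H)} {M : POVM G H}

lemma IsPhaseMatrix.isCovariant (hU : ∀ w i, U w (b i) = (χ i w : ℂ) • b i)
    (h : IsPhaseMatrix b χ μ M.toFun c) : M.IsCovariant U := by
  intro w B hB φ ψ
  let Uw : H →L[ℂ] H := (U w).toContinuousLinearEquiv
  have hB' : MeasurableSet ((w * ·) '' B) :=
    (measurableEmbedding_mulLeft w).measurableSet_image.mpr hB
  have hconj : Uw.adjoint ∘L M.toFun ((w * ·) '' B) ∘L Uw = M.toFun B := by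
    refine formMatrix_hilbertBasis_injective b (Matrix.ext fun k l ↦ ?_)
    calc ⟪b k, Uw.adjoint (M.toFun ((w * ·) '' B) (Uw (b l)))⟫
        = ⟪U w (b k), M.toFun ((w * ·) '' B) (U w (b l))⟫ :=
          ContinuousLinearMap.adjoint_inner_right _ _ _
      _ = c k l * ∫ z in B, ((χ k / χ l) z : ℂ) ∂μ := by
          rw [inner_map_basis hU, h k l _ hB', setIntegral_image_mul_left_character,
            mul_left_comm, inv_mul_cancel_left₀ (Circle.coe_ne_zero _)]
      _ = ⟪b k, M.toFun B (b l)⟫ := (h k l B hB).symm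
  rw [← hconj]
  exact (ContinuousLinearMap.adjoint_inner_right Uw φ _).symm

lemma POVM.IsCovariant.exists_isPhaseMatrix [SecondCountableTopology G] [IsProbabilityMeasure μ]
    (hU : ∀ w i, U w (b i) = (χ i w : ℂ) • b i) (hM : M.IsCovariant U) :
    ∃ c, IsPhaseMatrix b χ μ M.toFun c := by
  have hequiv : ∀ k l w B, MeasurableSet B → M.complexMeasure (b k) (b l) ((w * ·) '' B)
      = (χ k / χ l) w * M.complexMeasure (b k) (b l) B := fun k l w B hB ↦ by
    have hB' : MeasurableSet ((w * ·) '' B) :=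
      (measurableEmbedding_mulLeft w).measurableSet_image.mpr hB
    rw [M.complexMeasure_apply _ _ hB, M.complexMeasure_apply _ _ hB', ← hM w B hB,
      inner_map_basis hU, mul_inv_cancel_left₀ (Circle.coe_ne_zero _)]
  choose c hc using fun k l ↦
    exists_complexMeasure_apply_eq_mul_setIntegral (χ k / χ l) μ (hequiv k l)
  exact ⟨c, fun k l B hB ↦ (M.complexMeasure_apply _ _ hB).symm.trans (hc k l B hB)⟩

theorem POVM.isExtremeCovariant_iff [SecondCountableTopology G] [IsProbabilityMeasure μ]
    [μ.IsOpenPosMeasure] (hχ : Function.Injective χ) (hU : ∀ w i, U w (b i) = (χ i w : ℂ) • b i)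
    (hc : IsPhaseMatrix b χ μ M.toFun c) :
    M.IsExtremeCovariant U ↔ c ∈ (correlationMatrices ι).extremePoints ℝ := by
  refine ⟨fun hext ↦ ?_, fun hext M₁ M₂ hM₁ hM₂ t ht0 ht1 hM ↦ ?_⟩
  · rw [mem_extremePoints_iff_left]
    refine ⟨hc.mem_correlationMatrices, ?_⟩
    rintro c₁ hc₁ c₂ hc₂ ⟨a, d, ha, hd, had, hsum⟩
    obtain rfl : d = 1 - a := by linarith
    obtain ⟨M₁, h₁⟩ := exists_isPhaseMatrix_of_mem_correlationMatrices (μ := μ) b hχ hc₁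
    obtain ⟨M₂, h₂⟩ := exists_isPhaseMatrix_of_mem_correlationMatrices (μ := μ) b hχ hc₂
    have hM := (hc.forall_eq_iff (h₁.smul_add_smul h₂ a (1 - a))).mpr hsum.symm
    have hM₁ := hext M₁ M₂ (h₁.isCovariant hU) (h₂.isCovariant hU) a ha (by linarith) hM
    exact (h₁.forall_eq_iff hc).mp fun B hB ↦ (hM₁ B hB).1
  · obtain ⟨c₁, h₁⟩ := hM₁.exists_isPhaseMatrix (μ := μ) hU
    obtain ⟨c₂, h₂⟩ := hM₂.exists_isPhaseMatrix (μ := μ) hU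
    have hsum := (hc.forall_eq_iff (h₁.smul_add_smul h₂ t (1 - t))).mp hM
    obtain ⟨rfl, rfl⟩ := (mem_extremePoints.mp hext).2 c₁ h₁.mem_correlationMatrices
      c₂ h₂.mem_correlationMatrices ⟨t, 1 - t, ht0, sub_pos.mpr ht1, by ring, hsum.symm⟩
    exact fun B hB ↦ ⟨h₁.apply_eq hc hB, h₂.apply_eq hc hB⟩

end Covariance

end PhaseMatrix

section Torus

variable {n : ℕ}

/-- The continuous homomorphism `z ↦ ⟨z, m⟩` of the torus into the circle group, the bundled form
of `torusChar`. -/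
noncomputable def torusCharacter (m : Fin n → ℤ) : (Fin n → Circle) →ₜ* Circle where
  toFun z := ∏ i, z i ^ m i
  map_one' := by simp
  map_mul' z w := by simp [mul_zpow, Finset.prod_mul_distrib]
  continuous_toFun := continuous_finsetProd _ fun i _ ↦ (continuous_apply i).zpow (m i)

lemma coe_torusCharacter (m : Fin n → ℤ) (z : Fin n → Circle) :
    (torusCharacter m z : ℂ) = torusChar z m :=
  (map_prod Circle.coeHom _ _).trans (Finset.prod_congr rfl fun i _ ↦ Circle.coe_zpow (z i) (m i))

lemma torusCharacter_sub (k l : Fin n → ℤ) :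
    torusCharacter (k - l) = torusCharacter k / torusCharacter l := by
  ext z : 1
  change ∏ i, z i ^ (k i - l i) = (∏ i, z i ^ k i) / ∏ i, z i ^ l i
  simp only [zpow_sub, Finset.prod_mul_distrib, Finset.prod_inv_distrib, div_eq_mul_inv]

lemma torusCharacter_ne_one {m : Fin n → ℤ} (hm : m ≠ 0) : torusCharacter m ≠ 1 := by
  obtain ⟨i, hi⟩ := Function.ne_iff.mp hm
  refine DFunLike.ne_iff.mpr ⟨Pi.mulSingle i (Circle.exp (Real.pi / m i)), ?_⟩
  have hval : torusCharacter m (Pi.mulSingle i (Circle.exp (Real.pi / m i)))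
      = Circle.exp Real.pi := by
    change ∏ j, (Pi.mulSingle i (Circle.exp (Real.pi / m i)) : Fin n → Circle) j ^ m j = _
    rw [Finset.prod_eq_single i (fun j _ hj ↦ by simp [hj]) (by simp), Pi.mulSingle_eq_same,
      ← Circle.exp_zsmul, zsmul_eq_mul, mul_div_cancel₀ _ (Int.cast_ne_zero.mpr hi)]
  rw [hval]
  exact Circle.exp_pi_ne_one

lemma torusCharacter_injective : Function.Injective (torusCharacter (n := n)) := fun k l h ↦ by
  by_contra hkl
  exact torusCharacter_ne_one (sub_ne_zero.mpr hkl) (by rw [torusCharacter_sub, h, div_self'])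

end Torus

theorem stmt9_general {ι G H E : Type*} [CommGroup G] [TopologicalSpace G] [IsTopologicalGroup G]
    [SecondCountableTopology G] [MeasurableSpace G] [BorelSpace G]
    [NormedAddCommGroup H] [InnerProductSpace ℂ H] [CompleteSpace H]
    [NormedAddCommGroup E] [InnerProductSpace ℂ E] [CompleteSpace E]
    (b : HilbertBasis ι ℂ H) (μ : Measure G) [μ.IsHaarMeasure] [IsProbabilityMeasure μ]
    {χ : ι → G →ₜ* Circle} (hχ : Function.Injective χ)
    (U : G → (H ≃ₗᵢ[ℂ] H)) (hU : ∀ w i, U w (b i) = (χ i w : ℂ) • b i)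
    (ξ : ι → E) (hξ : ∀ i, ‖ξ i‖ = 1) (M : POVM G H)
    (hM : IsPhaseMatrix b χ μ M.toFun (Matrix.gram ℂ ξ)) :
    M.IsExtremeCovariant U ↔
      ∀ A : E →L[ℂ] E,
        (∀ v, A v ∈ (Submodule.span ℂ (range ξ)).topologicalClosure) →
        (∀ v ∈ ((Submodule.span ℂ (range ξ)).topologicalClosure)ᗮ, A v = 0) →
        (∀ i, ⟪ξ i, A (ξ i)⟫ = 0) →
        A = 0 := by
  rw [POVM.isExtremeCovariant_iff hχ hU hM, gram_mem_extremePoints_iff hξ,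
    forall_compression_eq_zero_iff]

theorem stmt9 (n : ℕ) (hn : 1 ≤ n) (Z : Set (Fin n → ℤ)) (hZ : Z.Nonempty)
    (H : Type*) [NormedAddCommGroup H] [InnerProductSpace ℂ H] [CompleteSpace H]
    (b : HilbertBasis Z ℂ H)
    (μ : Measure (Fin n → Circle)) (hHaar : μ.IsHaarMeasure) (hProb : IsProbabilityMeasure μ)
    (U : (Fin n → Circle) → (H ≃ₗᵢ[ℂ] H))
    (hU : ∀ w : Fin n → Circle, ∀ m : Z, U w (b m) = torusChar w (m : Fin n → ℤ) • b m)
    (ξ : Z → ell2) (hξ : ∀ m : Z, ‖ξ m‖ = 1)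
    (M : POVM (Fin n → Circle) H) (hMcov : TorusCovariant U M)
    (hMform : ∀ k l : Z, ∀ B : Set (Fin n → Circle), MeasurableSet B →
      ⟪b k, M.toFun B (b l)⟫
        = ⟪ξ k, ξ l⟫ * ∫ z in B, torusChar z ((k : Fin n → ℤ) - l) ∂μ) :
    IsExtremeTorusCovariant U M ↔
      -- the only bounded operator `A` on `𝐇` (the closed span of the `ξ_m`, identified with
      -- the operators on `ℓ²(ℕ)` mapping `𝐇` into itself and vanishing on `𝐇ᗮ`)
      -- satisfying `⟨ξ_m, A ξ_m⟩ = 0` for all `m ∈ Z` is `A = 0`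
      ∀ A : ell2 →L[ℂ] ell2,
        (∀ v : ell2, A v ∈ (Submodule.span ℂ (Set.range ξ)).topologicalClosure) →
        (∀ v ∈ ((Submodule.span ℂ (Set.range ξ)).topologicalClosure)ᗮ, A v = 0) →
        (∀ m : Z, ⟪ξ m, A (ξ m)⟫ = 0) →
        A = 0 := by
  refine stmt9_general b μ (torusCharacter_injective.comp Subtype.val_injective) U
    (fun w m ↦ by simpa [coe_torusCharacter] using hU w m) ξ hξ M fun k l B hB ↦ ?_
  simpa only [Function.comp_apply, Matrix.gram_apply, ← torusCharacter_sub, coe_torusCharacter]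
    using hMform k l B hB
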